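/- arXiv:2107.14032 — 2 statements merged into one kernel-verified Lean document; each statement's English description precedes it below -/
import Mathlib

section
/- For every positive integer n, the Lebesgue volume of the unit ball B^n(1) in ℝ^n equals (π^{n/2−1}/2) · lim_{ε→0⁺} ∫_ℝ e^{ik}·(ε + ik)^{−(n/2+1)} dk, where the complex power is the principal branch. -/
open MeasureTheory Filter Topology

open Set in
lemma integrableOn_rpow_mul_cexp_neg_mul {p : ℝ} (hp : -1 < p) {z : ℂ} (hz : 0 < z.re) :
    IntegrableOn (fun t : ℝ => ((t ^ p : ℝ) : ℂ) * Complex.exp (-(z * t))) (Ioi 0) := by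
  have h := integrableOn_rpow_mul_exp_neg_mul_rpow hp one_pos hz
  refine Integrable.mono' h (by fun_prop) ?_
  filter_upwards [ae_restrict_mem measurableSet_Ioi] with t ht
  have ht : 0 < t := ht
  simp [Complex.norm_exp, abs_of_nonneg (Real.rpow_nonneg ht.le p)]

open Set in
lemma hasDerivAt_integral_rpow_mul_cexp_neg_mul {s : ℝ} (hs : 0 < s) {z : ℂ} (hz : 0 < z.re) :
    HasDerivAt (fun w : ℂ => ∫ t : ℝ in Ioi 0, ((t ^ (s - 1) : ℝ) : ℂ) * Complex.exp (-(w * t)))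
      (∫ t : ℝ in Ioi 0, ((t ^ (s - 1) : ℝ) : ℂ) * (Complex.exp (-(z * t)) * -t)) z := by
  have hopen : IsOpen {w : ℂ | z.re / 2 < w.re} := isOpen_lt (by fun_prop) (by fun_prop)
  refine (hasDerivAt_integral_of_dominated_loc_of_deriv_le
    (μ := volume.restrict (Ioi 0))
    (F := fun w (t : ℝ) => ((t ^ (s - 1) : ℝ) : ℂ) * Complex.exp (-(w * t)))
    (F' := fun w (t : ℝ) => ((t ^ (s - 1) : ℝ) : ℂ) * (Complex.exp (-(w * t)) * -t))
    (bound := fun t : ℝ => t ^ s * Real.exp (-(z.re / 2) * t ^ (1 : ℝ)))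
    (hopen.mem_nhds (by simpa using hz)) (.of_forall fun w => by fun_prop)
    (integrableOn_rpow_mul_cexp_neg_mul (by linarith) hz) (by fun_prop) ?_
    (integrableOn_rpow_mul_exp_neg_mul_rpow (by linarith) one_pos (by positivity)) ?_).2
  · filter_upwards [ae_restrict_mem measurableSet_Ioi] with t ht w hw
    have ht : 0 < t := ht
    have hw : z.re / 2 < w.re := hw
    have hts : t ^ s = t ^ (s - 1) * t := by
      rw [← Real.rpow_add_one ht.ne', sub_add_cancel]
    have : Real.exp (-(w.re * t)) ≤ Real.exp (-(z.re / 2) * t) :=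
      Real.exp_le_exp.2 (by nlinarith)
    simp only [norm_mul, Complex.norm_real, Complex.norm_exp, norm_neg, Real.norm_eq_abs,
      abs_of_nonneg (Real.rpow_nonneg ht.le _), abs_of_pos ht, Complex.neg_re,
      Complex.re_mul_ofReal, Real.rpow_one, hts]
    calc t ^ (s - 1) * (Real.exp (-(w.re * t)) * t)
        = t ^ (s - 1) * t * Real.exp (-(w.re * t)) := by ring
      _ ≤ _ := by gcongr
  · filter_upwards with t w _
    have h : HasDerivAt (fun w : ℂ => -(w * t)) (-(t : ℂ)) w := by
      simpa using ((hasDerivAt_id' w).mul_const (t : ℂ)).fun_neg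
    exact h.cexp.const_mul _

open Set in
/-- The Laplace transform of `t ^ (s - 1)` on the right half-plane. -/
lemma integral_rpow_mul_cexp_neg_mul {s : ℝ} (hs : 0 < s) {z : ℂ} (hz : 0 < z.re) :
    ∫ t : ℝ in Ioi 0, ((t ^ (s - 1) : ℝ) : ℂ) * Complex.exp (-(z * t)) =
      z ^ (-(s : ℂ)) * Complex.Gamma s := by
  let U : Set ℂ := {w | 0 < w.re}
  have hU : IsOpen U := isOpen_lt continuous_const Complex.continuous_re
  have hF : AnalyticOnNhd ℂ
      (fun w : ℂ => ∫ t : ℝ in Ioi 0, ((t ^ (s - 1) : ℝ) : ℂ) * Complex.exp (-(w * t))) U :=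
    DifferentiableOn.analyticOnNhd (fun w hw =>
      (hasDerivAt_integral_rpow_mul_cexp_neg_mul hs hw).differentiableAt.differentiableWithinAt) hU
  have hG : AnalyticOnNhd ℂ (fun w : ℂ => w ^ (-(s : ℂ)) * Complex.Gamma s) U :=
    DifferentiableOn.analyticOnNhd (fun w hw =>
      ((differentiableAt_id.cpow_const (Or.inl hw)).mul_const _).differentiableWithinAt) hU
  have hconn : IsPreconnected U := (convex_halfSpace_re_gt 0).isPreconnected
  refine hF.eqOn_of_preconnected_of_frequently_eq hG hconn (z₀ := 1) (by simp [U]) ?_ hz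
  have hreal : ∀ᶠ x : ℝ in 𝓝[≠] 1,
      ∫ t : ℝ in Ioi 0, ((t ^ (s - 1) : ℝ) : ℂ) * Complex.exp (-((x : ℂ) * t)) =
        (x : ℂ) ^ (-(s : ℂ)) * Complex.Gamma s := by
    filter_upwards [nhdsWithin_le_nhds (lt_mem_nhds zero_lt_one)] with x hx
    have h := congrArg (fun y : ℝ => (y : ℂ)) (Real.integral_rpow_mul_exp_neg_mul_Ioi hs hx)
    simp only [← integral_complex_ofReal, Complex.ofReal_mul, Complex.ofReal_exp,
      Complex.ofReal_neg] at h
    rw [h, Complex.Gamma_ofReal, one_div, Real.inv_rpow hx.le, ← Real.rpow_neg hx.le,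
      Complex.ofReal_cpow hx.le, Complex.ofReal_neg]
  have htend : Tendsto (fun x : ℝ => (x : ℂ)) (𝓝[≠] 1) (𝓝[≠] 1) := by
    refine tendsto_nhdsWithin_iff.2 ⟨?_, ?_⟩
    · exact (Complex.continuous_ofReal.tendsto' 1 1 (by simp)).mono_left nhdsWithin_le_nhds
    · filter_upwards [self_mem_nhdsWithin] with x hx
      simpa using hx
  exact htend.frequently hreal.frequently

lemma integrable_add_I_mul_cpow_neg {s ε : ℝ} (hs : 1 < s) (hε : 0 < ε) :
    Integrable (fun k : ℝ => ((ε : ℂ) + Complex.I * k) ^ (-(s : ℂ))) := by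
  have hslit (k : ℝ) : (ε : ℂ) + Complex.I * k ∈ Complex.slitPlane := Or.inl (by simpa using hε)
  have hscaled : Integrable (fun k : ℝ => (1 + ‖ε⁻¹ * k‖ ^ 2) ^ (-s / 2)) :=
    (integrable_rpow_neg_one_add_norm_sq (E := ℝ) (μ := volume) (r := s)
      (by simpa using hs)).comp_mul_left' (inv_ne_zero hε.ne')
  refine (hscaled.const_mul (ε ^ (-s))).mono' (Continuous.aestronglyMeasurable ?_)
    (.of_forall fun k => le_of_eq ?_)
  · exact Continuous.cpow (by fun_prop) continuous_const hslit
  · have hnorm : ‖(ε : ℂ) + Complex.I * k‖ ^ 2 = ε ^ 2 * (1 + ‖ε⁻¹ * k‖ ^ 2) := by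
      rw [← Complex.normSq_eq_norm_sq, Complex.normSq_apply, Real.norm_eq_abs, sq_abs]
      simp
      field_simp
    rw [← Complex.ofReal_neg, Complex.norm_cpow_real]
    calc ‖(ε : ℂ) + Complex.I * k‖ ^ (-s)
        = (‖(ε : ℂ) + Complex.I * k‖ ^ 2) ^ (-s / 2) := by
          rw [← Real.rpow_natCast_mul (norm_nonneg _)]; congr 1; push_cast; ring
      _ = _ := by
          rw [hnorm, Real.mul_rpow (by positivity) (by positivity),
            ← Real.rpow_natCast_mul hε.le]
          congr 2; push_cast; ring

open Set FourierTransform in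
/-- The inverse Laplace transform of `z ^ (-s)` along `re z = ε`, evaluated at `1`. -/
lemma integral_cexp_mul_add_I_mul_cpow_neg {s ε : ℝ} (hs : 1 < s) (hε : 0 < ε) :
    ∫ k : ℝ, Complex.exp (Complex.I * k) * ((ε : ℂ) + Complex.I * k) ^ (-(s : ℂ)) =
      2 * Real.pi * Complex.exp (-ε) / Complex.Gamma s := by
  have hs0 : 0 < s := by linarith
  have hpi : (0 : ℝ) < 2 * Real.pi := by positivity
  have hΓ : Complex.Gamma s ≠ 0 := Complex.Gamma_ne_zero_of_re_pos (by simpa using hs0)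
  let f : ℝ → ℂ :=
    (Ioi 0).indicator fun t => ((t ^ (s - 1) : ℝ) : ℂ) * Complex.exp (-((ε : ℂ) * t))
  let g : ℝ → ℂ := fun k => ((ε : ℂ) + Complex.I * k) ^ (-(s : ℂ))
  have hf : Integrable f :=
    (integrable_indicator_iff measurableSet_Ioi).2
      (integrableOn_rpow_mul_cexp_neg_mul (by linarith) (by simpa using hε))
  have hFf : 𝓕 f = fun w => g (2 * Real.pi * w) * Complex.Gamma s := by
    ext w
    have h := integral_rpow_mul_cexp_neg_mul hs0
      (z := (ε : ℂ) + Complex.I * ((2 * Real.pi * w : ℝ) : ℂ)) (by simpa using hε)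
    rw [Real.fourier_eq']
    simp only [g]
    rw [← h, ← integral_indicator measurableSet_Ioi]
    congr 1 with t
    by_cases ht : t ∈ Ioi (0 : ℝ)
    · simp only [f, indicator_of_mem ht, smul_eq_mul]
      rw [mul_left_comm, ← Complex.exp_add]
      congr 2
      simp
      ring
    · simp [f, indicator_of_notMem ht]
  have hFint : Integrable (𝓕 f) := by
    rw [hFf]
    exact ((integrable_add_I_mul_cpow_neg hs hε).comp_mul_left' hpi.ne').mul_const _
  have hcont : ContinuousAt f 1 := by
    have hcont' : ContinuousAt
        (fun t : ℝ => ((t ^ (s - 1) : ℝ) : ℂ) * Complex.exp (-((ε : ℂ) * t))) 1 := by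
      have : ContinuousAt (fun t : ℝ => t ^ (s - 1)) 1 :=
        Real.continuousAt_rpow_const _ _ (Or.inl one_ne_zero)
      fun_prop
    refine hcont'.congr ?_
    filter_upwards [lt_mem_nhds zero_lt_one] with t ht
    simp [f, indicator_of_mem (show t ∈ Ioi (0 : ℝ) from ht)]
  have hinv := hf.fourierInv_fourier_eq hFint hcont
  rw [hFf, Real.fourierInv_eq'] at hinv
  have hsub := Measure.integral_comp_mul_left
    (fun k : ℝ => Complex.exp (Complex.I * k) * g k) (2 * Real.pi)
  have hleft : ∫ w : ℝ, Complex.exp (((2 * Real.pi * inner ℝ w 1 : ℝ) : ℂ) * Complex.I) •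
      (g (2 * Real.pi * w) * Complex.Gamma s) =
      (∫ w : ℝ, Complex.exp (Complex.I * ((2 * Real.pi * w : ℝ) : ℂ)) * g (2 * Real.pi * w)) *
        Complex.Gamma s := by
    rw [← integral_mul_const]
    congr 1 with w
    simp [mul_comm, mul_left_comm]
  rw [hleft, hsub, abs_of_pos (inv_pos.2 hpi)] at hinv
  have hf1 : f 1 = Complex.exp (-ε) := by simp [f]
  rw [hf1, Complex.real_smul] at hinv
  rw [eq_div_iff hΓ, ← hinv]
  simp only [g]
  push_cast
  have : (Real.pi : ℂ) ≠ 0 := by simp [Real.pi_ne_zero]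
  field_simp

/-- For every positive integer `n`, the volume of the unit ball in `ℝ^n` equals
`(π^{n/2−1}/2) · lim_{ε→0⁺} ∫_ℝ e^{ik} (ε + ik)^{−(n/2+1)} dk` (the limit exists). -/
theorem volume_unit_ball_eq_limit_integral (n : ℕ) (hn : 0 < n) :
    (∃ L : ℂ, Tendsto (fun ε : ℝ =>
        ∫ k : ℝ, Complex.exp (Complex.I * k) *
          ((ε : ℂ) + Complex.I * k) ^ (-((n : ℂ) / 2 + 1))) (𝓝[>] 0) (𝓝 L)) ∧
    ((volume (Metric.closedBall (0 : EuclideanSpace ℝ (Fin n)) 1)).toReal : ℂ) =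
      (Real.pi : ℂ) ^ ((n : ℂ) / 2 - 1) / 2 *
        limUnder (𝓝[>] (0 : ℝ)) (fun ε : ℝ =>
          ∫ k : ℝ, Complex.exp (Complex.I * k) *
            ((ε : ℂ) + Complex.I * k) ^ (-((n : ℂ) / 2 + 1))) := by
  have hs : (1 : ℝ) < n / 2 + 1 := by
    have : (0 : ℝ) < n := by exact_mod_cast hn
    linarith
  have hcast : (n : ℂ) / 2 + 1 = ((n / 2 + 1 : ℝ) : ℂ) := by push_cast; rfl
  have hlim : Tendsto (fun ε : ℝ => ∫ k : ℝ, Complex.exp (Complex.I * k) *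
      ((ε : ℂ) + Complex.I * k) ^ (-((n : ℂ) / 2 + 1))) (𝓝[>] 0)
      (𝓝 (2 * Real.pi / Complex.Gamma ((n / 2 + 1 : ℝ) : ℂ))) := by
    have hexp : Tendsto (fun ε : ℝ =>
        2 * Real.pi * Complex.exp (-ε) / Complex.Gamma ((n / 2 + 1 : ℝ) : ℂ)) (𝓝[>] 0)
        (𝓝 (2 * Real.pi / Complex.Gamma ((n / 2 + 1 : ℝ) : ℂ))) :=
      (Continuous.tendsto' (by fun_prop) 0 _ (by simp)).mono_left nhdsWithin_le_nhds
    refine hexp.congr' ?_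
    filter_upwards [self_mem_nhdsWithin] with ε hε
    rw [hcast, integral_cexp_mul_add_I_mul_cpow_neg hs hε]
  refine ⟨⟨_, hlim⟩, ?_⟩
  have : NeZero n := ⟨hn.ne'⟩
  have hpi : (Real.pi : ℂ) ≠ 0 := by simp [Real.pi_ne_zero]
  have hsqrt : ((√Real.pi : ℝ) : ℂ) ^ n = (Real.pi : ℂ) ^ ((n : ℂ) / 2) := by
    rw [Real.sqrt_eq_rpow, Complex.ofReal_cpow Real.pi_pos.le, ← Complex.cpow_mul_nat]
    congr 1
    push_cast
    ring
  have hΓ : 0 < Real.Gamma (n / 2 + 1) := Real.Gamma_pos_of_pos (by linarith)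
  rw [hlim.limUnder_eq, EuclideanSpace.volume_closedBall, Complex.Gamma_ofReal,
    Complex.cpow_sub _ _ hpi, Complex.cpow_one]
  simp only [ENNReal.ofReal_one, one_pow, one_mul, Fintype.card_fin]
  rw [ENNReal.toReal_ofReal (by positivity), Complex.ofReal_div, Complex.ofReal_pow, hsqrt]
  field_simp
end

section
/- For every real s with 0 < s < 1 and every Schwartz function φ : ℝ → ℂ, lim_{ε→0⁺} ∫_ℝ φ(x)·(ε + ix)^{−s} dx = ∫_ℝ φ(x)·(ix)^{−s} dx, where both complex powers are taken with respect to the principal branch and both integrals converge absolutely. -/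
open MeasureTheory Filter Topology

/-- A function which is integrable and bounded stays integrable after multiplication by the
locally integrable singularity `|x| ^ (-s)`. -/
theorem integrable_norm_mul_abs_rpow_neg {E : Type*} [NormedAddCommGroup E] {s C : ℝ}
    (hs0 : 0 ≤ s) (hs1 : s < 1) {f : ℝ → E} (hf : Integrable f) (hC : ∀ x, ‖f x‖ ≤ C) :
    Integrable (fun x : ℝ => ‖f x‖ * |x| ^ (-s)) := by
  have hloc : IntegrableOn (fun x : ℝ => |x| ^ (-s)) (Set.Ioc (-1) 1) := by
    have h := (intervalIntegral.intervalIntegrable_cpow' (a := -1) (b := 1)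
      (r := ((-s : ℝ) : ℂ)) (by rw [Complex.ofReal_re]; linarith)).norm
    rw [intervalIntegrable_iff_integrableOn_Ioc_of_le (by norm_num)] at h
    simpa only [Complex.norm_cpow_real, Complex.norm_real, Real.norm_eq_abs] using h
  have hbound : Integrable (fun x : ℝ =>
      (Set.Ioc (-1) 1).indicator (fun x : ℝ => C * |x| ^ (-s)) x + ‖f x‖) :=
    (IntegrableOn.integrable_indicator (hloc.const_mul C) measurableSet_Ioc).add hf.norm
  have hmeas : Measurable (fun x : ℝ => |x| ^ (-s)) := by fun_prop
  refine hbound.mono' (hf.1.norm.mul hmeas.aestronglyMeasurable)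
    (Eventually.of_forall fun x => ?_)
  have hpow : 0 ≤ |x| ^ (-s) := Real.rpow_nonneg (abs_nonneg x) _
  rw [Real.norm_of_nonneg (mul_nonneg (norm_nonneg _) hpow)]
  by_cases hx : x ∈ Set.Ioc (-1 : ℝ) 1
  · rw [Set.indicator_of_mem hx]
    exact (mul_le_mul_of_nonneg_right (hC x) hpow).trans
      (le_add_of_nonneg_right (norm_nonneg _))
  · rw [Set.indicator_of_notMem hx, zero_add]
    have hx1 : 1 ≤ |x| := by
      by_contra! h
      exact hx ⟨(abs_lt.1 h).1, (abs_lt.1 h).2.le⟩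
    exact mul_le_of_le_one_right (norm_nonneg _)
      (Real.rpow_le_one_of_one_le_of_nonpos hx1 (neg_nonpos.2 hs0))

/-- On vertical lines, `|(ε + ix) ^ (-s)|` is at most `|x| ^ (-s)`. -/
theorem Complex.norm_add_I_mul_cpow_neg_le {s : ℝ} (hs0 : 0 ≤ s) (ε : ℝ) {x : ℝ} (hx : x ≠ 0) :
    ‖((ε : ℂ) + Complex.I * x) ^ (-(s : ℂ))‖ ≤ |x| ^ (-s) := by
  rw [← Complex.ofReal_neg, Complex.norm_cpow_real]
  refine Real.rpow_le_rpow_of_nonpos (abs_pos.2 hx) ?_ (neg_nonpos.2 hs0)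
  simpa using Complex.abs_im_le_norm ((ε : ℂ) + Complex.I * x)

/-- For every real `0 < s < 1` and every Schwartz function `φ : ℝ → ℂ`, both integrals
`∫ φ(x) (ε + ix)^{−s} dx` and `∫ φ(x) (ix)^{−s} dx` converge absolutely and
`lim_{ε→0⁺} ∫_ℝ φ(x) (ε + ix)^{−s} dx = ∫_ℝ φ(x) (ix)^{−s} dx`. -/
theorem tendsto_integral_schwartz_cpow (s : ℝ) (hs0 : 0 < s) (hs1 : s < 1)
    (φ : SchwartzMap ℝ ℂ) :
    (∀ ε : ℝ, 0 < ε → Integrable (fun x : ℝ =>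
        φ x * ((ε : ℂ) + Complex.I * x) ^ (-(s : ℂ)))) ∧
    Integrable (fun x : ℝ => φ x * (Complex.I * x) ^ (-(s : ℂ))) ∧
    Tendsto (fun ε : ℝ =>
        ∫ x : ℝ, φ x * ((ε : ℂ) + Complex.I * x) ^ (-(s : ℂ)))
      (𝓝[>] 0) (𝓝 (∫ x : ℝ, φ x * (Complex.I * x) ^ (-(s : ℂ)))) := by
  have hdom : Integrable (fun x : ℝ => ‖φ x‖ * |x| ^ (-s)) :=
    integrable_norm_mul_abs_rpow_neg hs0.le hs1 φ.integrable (φ.norm_le_seminorm ℝ)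
  have hne : ∀ᵐ x : ℝ, x ≠ 0 := Measure.ae_ne volume 0
  have hmeas (ε : ℝ) : AEStronglyMeasurable (fun x : ℝ =>
      φ x * ((ε : ℂ) + Complex.I * x) ^ (-(s : ℂ))) :=
    φ.continuous.aestronglyMeasurable.mul
      (Measurable.aestronglyMeasurable (by fun_prop))
  have hle (ε : ℝ) : ∀ᵐ x : ℝ,
      ‖φ x * ((ε : ℂ) + Complex.I * x) ^ (-(s : ℂ))‖ ≤ ‖φ x‖ * |x| ^ (-s) := by
    filter_upwards [hne] with x hx
    rw [norm_mul]
    exact mul_le_mul_of_nonneg_left (Complex.norm_add_I_mul_cpow_neg_le hs0.le ε hx)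
      (norm_nonneg _)
  have hint (ε : ℝ) := hdom.mono' (hmeas ε) (hle ε)
  refine ⟨fun ε _ => hint ε, by simpa using hint 0, ?_⟩
  refine tendsto_integral_filter_of_dominated_convergence _ (Eventually.of_forall hmeas)
    (Eventually.of_forall hle) hdom ?_
  filter_upwards [hne] with x hx
  have hslit : ((0 : ℝ) : ℂ) + Complex.I * x ∈ Complex.slitPlane :=
    Or.inr (by simpa using hx)
  have hcont : ContinuousAt (fun ε : ℝ =>
      φ x * ((ε : ℂ) + Complex.I * x) ^ (-(s : ℂ))) 0 :=
    continuousAt_const.mul (ContinuousAt.cpow (by fun_prop) continuousAt_const hslit)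
  simpa using hcont.tendsto.mono_left nhdsWithin_le_nhds
end
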